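/- Let p ≥ 3 be a prime. There exists a constant C > 0 depending only on p such that: for every real-split central division ℚ-algebra A of degree p, every order 𝒪 ⊆ A, every commutative ℚ-subalgebra E ⊆ A with dim_ℚ E = p (necessarily a field of degree p over ℚ), every z ∈ GL_p(ℝ) and every δ > 0, the number of units ξ ∈ 𝒪^× ∩ E for which there exists k ∈ SO(p) with every entry of nr(ξ)^{-1/p}·z⁻¹(ι ξ)z − k of absolute value less than δ is at most C·(1+δ)^{p-1}. (Here nr(ξ) = ±1 automatically, and t^{1/p} denotes the unique real p-th root of a nonzero real t, p being odd.) -/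

import Mathlib

open Matrix

/-- `IsSO k` : `k ∈ SO(n)`. -/
def IsSO {n : ℕ} (k : Matrix (Fin n) (Fin n) ℝ) : Prop :=
  kᵀ * k = 1 ∧ k.det = 1

/-- An order in a `ℚ`-algebra: a subring which is finitely generated as a `ℤ`-module and
contains a `ℚ`-basis of the algebra. -/
def IsOrder (A : Type*) [Ring A] [Algebra ℚ A] (O : Subring A) : Prop :=
  O.toAddSubgroup.FG ∧ Submodule.span ℚ (O : Set A) = ⊤

/-- For `p` odd and `t ≠ 0`, `negOddRoot p t` is `t^(-1/p)`, the inverse of the unique real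
`p`-th root `sign t · |t|^(1/p)` of `t`. -/
noncomputable def negOddRoot (p : ℕ) (t : ℝ) : ℝ :=
  Real.sign t * |t| ^ (-(1 : ℝ) / (p : ℝ))

/-!
Since `A` is a central division algebra, a shortest-relation argument shows that `ℝ ⊗ A → M_n(ℝ)` is
injective, hence bijective by dimension. Two consequences follow. First, the regular norm of `ξ` is
`nr(ξ) ^ n`, so `nr(ξ) = ±1` for a unit `ξ` of an order. Second, `ℝ ⊗ E → M_n(ℝ)` is injective, so
by Cayley-Hamilton every conjugate of `ξ ∈ E` is an eigenvalue of `ι ξ`. If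
`± z⁻¹ (ι ξ) z` is `δ`-close to `SO(n)`, Gershgorin's theorem bounds all conjugates of `ξ` by
`B = n (1 + δ)`. The logarithmic embedding sends the units of `E` with this property into a cube of
side `O(log B)` in dimension at most `n - 1`, and a unit cell contains boundedly many of them: their
quotients are integers of degree at most `n` with bounded conjugates. This gives
`O((1 + log B) ^ (n - 1))` such units, with constants depending only on `n`.
-/

open Module NumberField TensorProduct

section ScalarExtension

variable {k K A M : Type*} [CommRing k] [CommRing K] [Ring A] [Algebra k A] [Ring M] [Algebra k M]
  [Algebra K M]

theorem sum_smul_map_commutator_eq_zero {I : Type*} (f : A →ₐ[k] M) {c : I → K} {s : Finset I}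
    {a : I → A} (h : ∑ i ∈ s, c i • f (a i) = 0) (b : A) :
    ∑ i ∈ s, c i • f (b * a i - a i * b) = 0 := by
  have h_left := congrArg (f b * ·) h
  have h_right := congrArg (· * f b) h
  simp only [Finset.mul_sum, Finset.sum_mul, mul_zero, zero_mul, Algebra.mul_smul_comm,
    Algebra.smul_mul_assoc, ← map_mul] at h_left h_right
  simp only [map_sub, smul_sub, Finset.sum_sub_distrib, h_left, h_right, sub_zero]

variable [Algebra k K] [IsScalarTower k K M]

theorem sum_smul_map_algebraMap (f : A →ₐ[k] M) {I : Type*} (s : Finset I) (q : I → k)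
    (c : I → K) :
    ∑ i ∈ s, c i • f (algebraMap k A (q i)) = algebraMap K M (∑ i ∈ s, q i • c i) := by
  rw [map_sum]
  refine Finset.sum_congr rfl fun i _ => ?_
  rw [AlgHom.commutes, Algebra.algebraMap_eq_smul_one (A := M) (q i), smul_comm,
    Algebra.algebraMap_eq_smul_one, smul_assoc]

variable (K) in
/-- The `K`-algebra homomorphism `K ⊗[k] A → M`, `c ⊗ a ↦ c • f a`, induced by a homomorphism
`f` from a `k`-algebra `A` to a `K`-algebra `M`. -/
noncomputable def extendScalars (f : A →ₐ[k] M) : K ⊗[k] A →ₐ[K] M :=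
  Algebra.TensorProduct.lift (Algebra.ofId K M) f fun c a => Algebra.commutes c (f a)

@[simp]
theorem extendScalars_tmul (f : A →ₐ[k] M) (c : K) (a : A) :
    extendScalars K f (c ⊗ₜ a) = c • f a :=
  (Algebra.TensorProduct.lift_tmul ..).trans (Algebra.smul_def c (f a)).symm

theorem extendScalars_comp_injective [Module.Flat k K] {F : Type*} [Ring F] [Algebra k F]
    {f : A →ₐ[k] M} (hf : Function.Injective (extendScalars K f)) {j : F →ₐ[k] A}
    (hj : Function.Injective j) :
    Function.Injective (extendScalars K (f.comp j)) := by
  have h_comp : extendScalars K (f.comp j) =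
      (extendScalars K f).comp (Algebra.TensorProduct.map (AlgHom.id K K) j) := by
    ext; simp
  rw [h_comp]
  exact hf.comp (Module.Flat.lTensor_preserves_injective_linearMap j.toLinearMap hj)

-- The Cayley-Hamilton relation of `ρ x` pulls back to `K ⊗[k] F` and pushes forward to `L`.
theorem aeval_charpoly_map_eq_zero {ν F L : Type*} [Fintype ν] [DecidableEq ν] [CommRing F]
    [Algebra k F] [CommRing L] [Algebra k L] [Algebra K L] [IsScalarTower k K L]
    {ρ : F →ₐ[k] Matrix ν ν K} (hρ : Function.Injective (extendScalars K ρ)) (φ : F →ₐ[k] L)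
    (x : F) : Polynomial.aeval (φ x) (ρ x).charpoly = 0 := by
  have h_one_tmul : Polynomial.aeval ((1 : K) ⊗ₜ[k] x) (ρ x).charpoly = 0 := by
    refine hρ ?_
    rw [← Polynomial.aeval_algHom_apply]
    simpa using Matrix.aeval_self_charpoly (ρ x)
  have h_map := congrArg (extendScalars K φ) h_one_tmul
  rw [← Polynomial.aeval_algHom_apply] at h_map
  simpa using h_map

end ScalarExtension

section CentralDivisionAlgebra

variable {k K D M : Type*} [Field k] [Field K] [Algebra k K] [DivisionRing D] [Algebra k D]
  [Algebra.IsCentral k D] [Ring M] [Nontrivial M] [Algebra k M] [Algebra K M] [IsScalarTower k K M]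

-- Normalise one coefficient to `1`: commutators with any `b` then give a shorter relation, so by
-- induction all coefficients are central, and the relation is a `k`-linear one among the `c i`.
theorem eq_zero_of_sum_smul_map_eq_zero (f : D →ₐ[k] M) {I : Type*} {c : I → K}
    (hc : LinearIndependent k c) (s : Finset I) :
    ∀ a : I → D, ∑ i ∈ s, c i • f (a i) = 0 → ∀ i ∈ s, a i = 0 := by
  classical
  induction s using Finset.induction_on with
  | empty => simp
  | insert i₀ s hi₀ ih =>
    intro a ha
    by_cases h₀ : a i₀ = 0
    · have hs : ∑ i ∈ s, c i • f (a i) = 0 := by simpa [Finset.sum_insert hi₀, h₀] using ha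
      simpa [h₀] using ih a hs
    exfalso
    set a' : I → D := fun i => (a i₀)⁻¹ * a i with ha'
    have h_one : a' i₀ = 1 := inv_mul_cancel₀ h₀
    have h_sum : ∑ i ∈ insert i₀ s, c i • f (a' i) = 0 := by
      simpa [ha', Finset.mul_sum] using congrArg (f (a i₀)⁻¹ * ·) ha
    have h_comm (i : I) (hi : i ∈ s) (b : D) : b * a' i = a' i * b := by
      refine sub_eq_zero.1 (ih (fun i => b * a' i - a' i * b) ?_ i hi)
      simpa [Finset.sum_insert hi₀, h_one] using sum_smul_map_commutator_eq_zero f h_sum b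
    have h_central (i : I) (hi : i ∈ insert i₀ s) : ∃ q : k, a' i = algebraMap k D q := by
      rcases Finset.mem_insert.1 hi with rfl | hi
      · exact ⟨1, by rw [map_one, h_one]⟩
      · exact (Algebra.IsCentral.mem_center_iff k).1 (Subalgebra.mem_center_iff.2 (h_comm i hi))
    choose! q hq using h_central
    have h_rel : ∑ i ∈ insert i₀ s, q i • c i = 0 := by
      refine (algebraMap K M).injective ?_
      rw [map_zero, ← h_sum, ← sum_smul_map_algebraMap f]
      exact Finset.sum_congr rfl fun i hi => by rw [hq i hi]
    have hi₀_mem := Finset.mem_insert_self i₀ s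
    have hq₀ : q i₀ = 0 := linearIndependent_iff'.1 hc _ q h_rel i₀ hi₀_mem
    simpa [hq₀, h_one] using hq i₀ hi₀_mem

theorem extendScalars_injective (f : D →ₐ[k] M) : Function.Injective (extendScalars K f) := by
  classical
  rw [injective_iff_map_eq_zero]
  intro x hx
  let b := Basis.ofVectorSpace k K
  obtain ⟨a, rfl⟩ := (TensorProduct.equivFinsuppOfBasisLeft (N := D) b).symm.surjective x
  simp only [TensorProduct.equivFinsuppOfBasisLeft_symm_apply, Finsupp.sum, map_sum,
    extendScalars_tmul] at hx ⊢
  have ha := eq_zero_of_sum_smul_map_eq_zero f b.linearIndependent a.support a hx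
  exact Finset.sum_eq_zero fun i hi => by rw [ha i hi, tmul_zero]

end CentralDivisionAlgebra

section Norm

theorem norm_apply_eq_algebraMap_norm {R S A B I : Type*} [CommRing R] [CommRing S] [Algebra R S]
    [Ring A] [Algebra R A] [Ring B] [Algebra R B] [Algebra S B] [IsScalarTower R S B] [Finite I]
    (f : A →ₐ[R] B) (b : Basis I R A) (c : Basis I S B) (hbc : ∀ i, c i = f (b i)) (x : A) :
    Algebra.norm S (f x) = algebraMap R S (Algebra.norm R x) := by
  classical
  cases nonempty_fintype I
  rw [Algebra.norm_eq_matrix_det b, Algebra.norm_eq_matrix_det c, RingHom.map_det]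
  congr 1
  ext i l
  have h_repr : c.repr (f (x * b l)) i = algebraMap R S (b.repr (x * b l) i) := by
    conv_lhs => rw [← b.sum_repr (x * b l)]
    simp only [map_sum, map_smul, ← hbc]
    simp [← algebraMap_smul S, Finsupp.single_apply]
  simpa [Algebra.leftMulMatrix_eq_repr_mul, hbc] using h_repr

variable {ν : Type*} [Fintype ν] [DecidableEq ν]

theorem norm_matrix_eq_det_pow {R : Type*} [CommRing R] (M : Matrix ν ν R) :
    Algebra.norm R M = M.det ^ Fintype.card ν := by
  have h_repr (N : Matrix ν ν R) (i i' : ν) : (Matrix.stdBasis R ν ν).repr N (i, i') = N i i' :=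
    rfl
  have h_kronecker :
      Algebra.leftMulMatrix (Matrix.stdBasis R ν ν) M = Matrix.kroneckerMap (· * ·) M 1 := by
    ext ⟨i, i'⟩ ⟨l, l'⟩
    obtain rfl | h := eq_or_ne i' l' <;>
      simp [Algebra.leftMulMatrix_eq_repr_mul, Matrix.stdBasis_eq_single, *]
  rw [Algebra.norm_eq_matrix_det (Matrix.stdBasis R ν ν), h_kronecker, Matrix.det_kronecker]
  simp

theorem algebraMap_norm_eq_det_pow {k K D : Type*} [Field k] [Field K] [Algebra k K]
    [DivisionRing D] [Algebra k D] [Algebra.IsCentral k D] [Nonempty ν]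
    (f : D →ₐ[k] Matrix ν ν K) (hD : finrank k D = Fintype.card ν ^ 2) (x : D) :
    algebraMap k K (Algebra.norm k x) = (f x).det ^ Fintype.card ν := by
  have : FiniteDimensional k D := Module.finite_of_finrank_pos (by rw [hD]; positivity)
  have h_finrank : finrank K (K ⊗[k] D) = finrank K (Matrix ν ν K) := by
    rw [finrank_baseChange, hD, finrank_matrix, finrank_self, mul_one, sq]
  let e := LinearEquiv.ofInjectiveOfFinrankEq (extendScalars K f).toLinearMap
    (extendScalars_injective f) h_finrank
  have he (y : K ⊗[k] D) : e y = extendScalars K f y := rfl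
  let b := finBasis k D
  rw [← norm_matrix_eq_det_pow]
  refine (norm_apply_eq_algebraMap_norm f b ((b.baseChange K).map e) (fun i => ?_) x).symm
  simp [he]

end Norm

section Order

variable {A : Type*} [Ring A] [Algebra ℚ A] {O : Subring A}

theorem IsOrder.finite (hO : IsOrder A O) : Module.Finite ℤ O :=
  Module.Finite.iff_addGroup_fg.2 ((AddGroup.fg_iff_addSubgroup_fg _).2 hO.1)

theorem IsOrder.isIntegral (hO : IsOrder A O) {x : A} (hx : x ∈ O) : IsIntegral ℤ x :=
  IsIntegral.of_mem_of_fg (subalgebraOfSubring O)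
    ((Submodule.fg_iff_addSubgroup_fg (AddSubgroup.toIntSubmodule O.toAddSubgroup)).2 hO.1) x hx

theorem IsOrder.exists_basis (hO : IsOrder A O) :
    ∃ (m : ℕ) (b : Basis (Fin m) ℤ O) (c : Basis (Fin m) ℚ A), ∀ i, c i = b i := by
  have := hO.finite
  have : IsAddTorsionFree A := .of_module_rat A
  have : IsAddTorsionFree O := Subtype.val_injective.isAddTorsionFree O.subtype.toAddMonoidHom
  let b := finBasis ℤ O
  have h_indep : LinearIndependent ℚ fun i => (b i : A) :=
    LinearIndependent.iff_fractionRing ℤ ℚ |>.1 <|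
      b.linearIndependent.map_injOn O.toAddSubgroup.subtype.toIntLinearMap
        Subtype.val_injective.injOn
  have h_span : ⊤ ≤ Submodule.span ℚ (Set.range fun i => (b i : A)) := by
    rw [← hO.2, Submodule.span_le]
    intro x hx
    have h_sum : ∑ i, b.repr ⟨x, hx⟩ i • (b i : A) = x := by
      simpa using congrArg O.subtype (b.sum_repr ⟨x, hx⟩)
    rw [← h_sum]
    exact sum_mem fun i _ => zsmul_mem (Submodule.subset_span (Set.mem_range_self i)) _
  exact ⟨_, b, Basis.mk h_indep h_span, fun i => Basis.mk_apply h_indep h_span i⟩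

theorem IsOrder.abs_norm_eq_one (hO : IsOrder A O) {x y : A} (hx : x ∈ O) (hy : y ∈ O)
    (hxy : x * y = 1) : |Algebra.norm ℚ x| = 1 := by
  obtain ⟨m, b, c, hbc⟩ := hO.exists_basis
  have h_norm (w : O) : Algebra.norm ℚ (w : A) = Algebra.norm ℤ w := by
    simpa using norm_apply_eq_algebraMap_norm O.subtype.toIntAlgHom b c hbc w
  have h_mul : Algebra.norm ℤ (⟨x, hx⟩ : O) * Algebra.norm ℤ (⟨y, hy⟩ : O) = 1 := by
    rw [← map_mul, show (⟨x, hx⟩ : O) * ⟨y, hy⟩ = 1 from Subtype.ext hxy, map_one]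
  have h_abs := Int.isUnit_iff_abs_eq.1 (IsUnit.of_mul_eq_one _ h_mul)
  rw [h_norm ⟨x, hx⟩]
  exact_mod_cast h_abs

end Order

section Packing

theorem floor_add_one_sub_floor_neg_toNat_le {R : ℝ} (hR : 0 ≤ R) :
    ((⌊R⌋ + 1 - ⌊-R⌋).toNat : ℝ) ≤ 2 * R + 2 := by
  have h_neg := Int.lt_floor_add_one (-R)
  have h_pos := Int.floor_le R
  have h_nonneg : 0 ≤ ⌊R⌋ + 1 - ⌊-R⌋ := by
    have := Int.floor_mono (show -R ≤ R by linarith)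
    linarith
  rw [← Int.cast_natCast, Int.toNat_of_nonneg h_nonneg]
  push_cast
  linarith

-- Cut the cube of side `2 R` into the unit cells on which the coordinatewise floor is constant.
theorem card_le_mul_pow_of_card_ball_le {α I : Type*} [Fintype I] (f : α → I → ℝ) (s : Finset α)
    {R : ℝ} (hR : 0 ≤ R) (hf : ∀ x ∈ s, ‖f x‖ ≤ R) {N : ℕ}
    (hN : ∀ x₀ ∈ s, Finset.card {x ∈ s | ‖f x - f x₀‖ ≤ 1} ≤ N) :
    (s.card : ℝ) ≤ N * (2 * R + 2) ^ Fintype.card I := by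
  classical
  let cell (x : α) : I → ℤ := fun i => ⌊f x i⌋
  let cells : Finset (I → ℤ) := Fintype.piFinset fun _ => Finset.Icc ⌊-R⌋ ⌊R⌋
  have h_cell_mem : ∀ x ∈ s, cell x ∈ cells := fun x hx => Fintype.mem_piFinset.2 fun i =>
    have h_abs := abs_le.1 ((norm_le_pi_norm (f x) i).trans (hf x hx))
    Finset.mem_Icc.2 ⟨Int.floor_mono h_abs.1, Int.floor_mono h_abs.2⟩
  have h_fiber : ∀ b ∈ cells, Finset.card {x ∈ s | cell x = b} ≤ N := by
    intro b _
    obtain h_empty | ⟨x₀, hx₀⟩ := Finset.eq_empty_or_nonempty {x ∈ s | cell x = b}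
    · simp [h_empty]
    rw [Finset.mem_filter] at hx₀
    refine (Finset.card_le_card fun x hx => ?_).trans (hN x₀ hx₀.1)
    rw [Finset.mem_filter] at hx ⊢
    refine ⟨hx.1, (pi_norm_le_iff_of_nonneg zero_le_one).2 fun i => ?_⟩
    exact (Int.abs_sub_lt_one_of_floor_eq_floor (congrFun (hx.2.trans hx₀.2.symm) i)).le
  have h_cells : (cells.card : ℝ) ≤ (2 * R + 2) ^ Fintype.card I := by
    simpa [cells] using pow_le_pow_left₀ (Nat.cast_nonneg _)
      (floor_add_one_sub_floor_neg_toNat_le hR) (Fintype.card I)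
  calc (s.card : ℝ) ≤ N * cells.card := by
        exact_mod_cast Finset.card_le_mul_card_image_of_maps_to h_cell_mem N h_fiber
    _ ≤ N * (2 * R + 2) ^ Fintype.card I := by gcongr

end Packing

section BoundedUnits

universe u

theorem exists_finite_conjugates_mem (n : ℕ) (B : ℝ) : ∃ S : Set ℂ, S.Finite ∧
    ∀ (F : Type u) [Field F] [NumberField F], finrank ℚ F = n → ∀ x : F, IsIntegral ℤ x →
      (∀ φ : F →+* ℂ, ‖φ x‖ ≤ B) → ∀ φ : F →+* ℂ, φ x ∈ S := by
  classical
  let C := Nat.ceil (max B 1 ^ n * n.choose (n / 2))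
  refine ⟨_, Polynomial.bUnion_roots_finite (algebraMap ℤ ℂ) n (Set.finite_Icc (-C : ℤ) C), ?_⟩
  intro F _ _ hF x hx hB φ
  have h_map := minpoly.isIntegrallyClosed_eq_field_fractions' ℚ hx
  simp_rw [Set.mem_iUnion]
  refine ⟨minpoly ℤ x, ⟨?_, fun i => ?_⟩, ?_⟩
  · rw [← (minpoly.monic hx).natDegree_map (algebraMap ℤ ℚ), ← h_map, ← hF]
    exact minpoly.natDegree_le x
  · rw [Set.mem_Icc, ← abs_le, ← @Int.cast_le ℝ]
    refine (Eq.trans_le ?_ <| Embeddings.coeff_bdd_of_norm_le hB i).trans (hF ▸ Nat.le_ceil _)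
    rw [h_map, Polynomial.coeff_map, eq_intCast, Int.norm_cast_rat, Int.norm_eq_abs, Int.cast_abs]
  · refine Polynomial.mem_rootSet.2 ⟨minpoly.ne_zero hx, ?_⟩
    rw [← φ.toIntAlgHom_apply, Polynomial.aeval_algHom_apply, minpoly.aeval, map_zero]

/-- The units of the ring of integers of `F` all of whose complex conjugates have absolute value
at most `B`. -/
def boundedUnits (F : Type*) [Field F] (B : ℝ) : Set (𝓞 F)ˣ :=
  {u | ∀ φ : F →+* ℂ, ‖φ (u : F)‖ ≤ B}

theorem exists_ncard_boundedUnits_le (n : ℕ) (B : ℝ) :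
    ∃ N : ℕ, ∀ (F : Type u) [Field F] [NumberField F], finrank ℚ F = n →
      (boundedUnits F B).ncard ≤ N := by
  obtain ⟨S, hS_fin, hS⟩ := exists_finite_conjugates_mem n B
  refine ⟨S.ncard, fun F _ _ hF => ?_⟩
  obtain ⟨φ⟩ : Nonempty (F →+* ℂ) := inferInstance
  exact Set.ncard_le_ncard_of_injOn (fun u : (𝓞 F)ˣ => φ (u : F))
    (fun u hu => hS F hF u u.val.prop hu φ)
    (φ.injective.comp (Units.coe_injective F)).injOn hS_fin

theorem boundedUnits_finite (F : Type*) [Field F] [NumberField F] (B : ℝ) :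
    (boundedUnits F B).Finite :=
  .of_finite_image ((Embeddings.finite_of_norm_le F ℂ B).subset <| by
    rintro _ ⟨u, hu, rfl⟩
    exact ⟨u.val.prop, hu⟩) (Units.coe_injective F).injOn

variable {F : Type*} [Field F] {B : ℝ} {u : (𝓞 F)ˣ}

theorem mem_boundedUnits_iff_infinitePlace :
    u ∈ boundedUnits F B ↔ ∀ w : InfinitePlace F, w (u : F) ≤ B :=
  (InfinitePlace.le_iff_le _ _).symm

variable [NumberField F]

-- The upper bound is immediate; the lower one holds because the components over all places
-- add up to zero.
theorem abs_mult_mul_log_le_of_mem_boundedUnits (hB : 1 ≤ B) (hu : u ∈ boundedUnits F B)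
    (w : InfinitePlace F) :
    |w.mult * Real.log (w (u : F))| ≤ finrank ℚ F * Real.log B := by
  classical
  have h_log_nonneg : 0 ≤ Real.log B := Real.log_nonneg hB
  have h_le (v : InfinitePlace F) : v.mult * Real.log (v (u : F)) ≤ v.mult * Real.log B := by
    gcongr
    · exact InfinitePlace.pos_iff.2 (Units.coe_ne_zero u)
    · exact mem_boundedUnits_iff_infinitePlace.1 hu v
  have h_finrank : ∑ v : InfinitePlace F, v.mult * Real.log B = finrank ℚ F * Real.log B := by
    rw [← Finset.sum_mul, ← InfinitePlace.sum_mult_eq, Nat.cast_sum]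
  have h_others := Finset.sum_le_sum fun v (_ : v ∈ Finset.univ.erase w) => h_le v
  have h_sum := Units.sum_mult_mul_log u
  rw [← Finset.add_sum_erase _ _ (Finset.mem_univ w)] at h_sum h_finrank
  have h_mult_nonneg : 0 ≤ w.mult * Real.log B := by positivity
  have h_others_nonneg : 0 ≤ ∑ v ∈ Finset.univ.erase w, v.mult * Real.log B :=
    Finset.sum_nonneg fun v _ => by positivity
  rw [abs_le]
  constructor <;> linarith [h_le w]

open scoped Classical in
theorem norm_logEmbedding_le_of_mem_boundedUnits (hB : 1 ≤ B) (hu : u ∈ boundedUnits F B) :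
    ‖Units.logEmbedding F (Additive.ofMul u)‖ ≤ finrank ℚ F * Real.log B := by
  have h_nonneg : 0 ≤ finrank ℚ F * Real.log B := by have := Real.log_nonneg hB; positivity
  exact (pi_norm_le_iff_of_nonneg h_nonneg).2 fun w =>
    abs_mult_mul_log_le_of_mem_boundedUnits hB hu w

theorem card_infinitePlace_le_finrank : Fintype.card (InfinitePlace F) ≤ finrank ℚ F := by
  rw [← InfinitePlace.sum_mult_eq, Fintype.card, Finset.card_eq_sum_ones]
  exact Finset.sum_le_sum fun w _ => InfinitePlace.mult_pos

open scoped Classical in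
theorem mem_boundedUnits_exp_of_norm_logEmbedding_le {r : ℝ} (hr : 0 ≤ r)
    (hu : ‖Units.logEmbedding F (Additive.ofMul u)‖ ≤ r) :
    u ∈ boundedUnits F (Real.exp (finrank ℚ F * r)) := by
  refine mem_boundedUnits_iff_infinitePlace.2 fun w => ?_
  rw [← Real.log_le_iff_le_exp (InfinitePlace.pos_iff.2 (Units.coe_ne_zero u))]
  calc Real.log (w (u : F)) ≤ Fintype.card (InfinitePlace F) * r :=
        (le_abs_self _).trans (Units.dirichletUnitTheorem.log_le_of_logEmbedding_le hr hu w)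
    _ ≤ finrank ℚ F * r := by gcongr; exact card_infinitePlace_le_finrank

open scoped Classical in
theorem card_filter_norm_logEmbedding_sub_le (s : Finset (𝓞 F)ˣ) (u₀ : (𝓞 F)ˣ) :
    Finset.card {u ∈ s | ‖Units.logEmbedding F (Additive.ofMul u) -
      Units.logEmbedding F (Additive.ofMul u₀)‖ ≤ 1} ≤
      (boundedUnits F (Real.exp (finrank ℚ F))).ncard := by
  rw [← Set.ncard_coe_finset]
  refine Set.ncard_le_ncard_of_injOn (· / u₀) (fun u hu => ?_) div_left_injective.injOn
    (boundedUnits_finite F _)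
  rw [Finset.mem_coe, Finset.mem_filter, ← map_sub, ← ofMul_div] at hu
  simpa using mem_boundedUnits_exp_of_norm_logEmbedding_le zero_le_one hu.2

theorem ncard_boundedUnits_le (hB : 1 ≤ B) :
    ((boundedUnits F B).ncard : ℝ) ≤ (boundedUnits F (Real.exp (finrank ℚ F))).ncard *
      (2 * (finrank ℚ F * Real.log B) + 2) ^ Units.rank F := by
  classical
  have h_log_nonneg := Real.log_nonneg hB
  have h_rank : Fintype.card {w : InfinitePlace F // w ≠ Units.dirichletUnitTheorem.w₀} =
      Units.rank F := by
    simp [Units.rank]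
  rw [Set.ncard_eq_toFinset_card _ (boundedUnits_finite F B), ← h_rank]
  exact card_le_mul_pow_of_card_ball_le (fun u => Units.logEmbedding F (Additive.ofMul u)) _
    (by positivity)
    (fun u hu => norm_logEmbedding_le_of_mem_boundedUnits hB (by simpa using hu))
    fun u₀ _ => card_filter_norm_logEmbedding_sub_le _ u₀

theorem exists_ncard_boundedUnits_le_mul_pow (n : ℕ) :
    ∃ C : ℝ, 0 < C ∧ ∀ (F : Type u) [Field F] [NumberField F], finrank ℚ F = n →
      ∀ B : ℝ, 1 ≤ B → ((boundedUnits F B).ncard : ℝ) ≤ C * B ^ (n - 1) := by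
  obtain ⟨N, hN⟩ := exists_ncard_boundedUnits_le.{u} n (Real.exp n)
  refine ⟨(N + 1) * (2 * n + 2) ^ (n - 1), by positivity, fun F _ _ hF B hB => ?_⟩
  have h_log : Real.log B ≤ B := (Real.log_le_sub_one_of_pos (by linarith)).trans (by linarith)
  have h_log_nonneg := Real.log_nonneg hB
  have h_rank : Units.rank F ≤ n - 1 :=
    hF ▸ Nat.sub_le_sub_right card_infinitePlace_le_finrank 1
  have h_card := hN F hF
  calc ((boundedUnits F B).ncard : ℝ)
      ≤ (boundedUnits F (Real.exp n)).ncard * (2 * (n * Real.log B) + 2) ^ Units.rank F := by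
        simpa only [hF] using ncard_boundedUnits_le (F := F) hB
    _ ≤ (N + 1) * (2 * (n * Real.log B) + 2) ^ (n - 1) := by
        gcongr
        · exact_mod_cast h_card.trans N.le_succ
        · nlinarith [mul_nonneg n.cast_nonneg h_log_nonneg]
    _ ≤ (N + 1) * ((2 * n + 2) * B) ^ (n - 1) := by
        gcongr
        nlinarith [mul_le_mul_of_nonneg_left h_log n.cast_nonneg]
    _ = (N + 1) * (2 * n + 2) ^ (n - 1) * B ^ (n - 1) := by rw [mul_pow, mul_assoc]

end BoundedUnits

section NearSO

theorem norm_le_of_aeval_charpoly_eq_zero {ν K L : Type*} [Fintype ν] [DecidableEq ν]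
    [NormedField K] [NormedField L] [NormedAlgebra K L] {N : Matrix ν ν K} {D : ℝ}
    (hN : ∀ i j, ‖N i j‖ ≤ D) {μ : L} (hμ : Polynomial.aeval μ N.charpoly = 0) :
    ‖μ‖ ≤ Fintype.card ν * D := by
  let N' : Matrix ν ν L := N.map (algebraMap K L)
  have h_eigenvalue : Module.End.HasEigenvalue (Matrix.toLin' N') μ := by
    rw [Module.End.hasEigenvalue_iff_isRoot_charpoly, Matrix.charpoly_toLin', Matrix.charpoly_map,
      Polynomial.IsRoot, Polynomial.eval_map_algebraMap, hμ]
  obtain ⟨i, hi⟩ := eigenvalue_mem_ball h_eigenvalue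
  rw [mem_closedBall_iff_norm] at hi
  calc ‖μ‖ ≤ ‖N' i i‖ + ‖μ - N' i i‖ := norm_le_norm_add_norm_sub' μ (N' i i)
    _ ≤ ‖N' i i‖ + ∑ j ∈ Finset.univ.erase i, ‖N' i j‖ := by gcongr
    _ = ∑ j, ‖N i j‖ := by
        rw [Finset.add_sum_erase _ (‖N' i ·‖) (Finset.mem_univ i)]
        simp [N', norm_algebraMap']
    _ ≤ Fintype.card ν * D := by
        simpa using Finset.sum_le_card_nsmul Finset.univ (‖N i ·‖) D fun j _ => hN i j

theorem IsSO.abs_apply_le_one {n : ℕ} {k : Matrix (Fin n) (Fin n) ℝ} (hk : IsSO k)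
    (i j : Fin n) : |k i j| ≤ 1 :=
  entry_norm_bound_of_unitary (Matrix.mem_unitaryGroup_iff'.2 hk.1) i j

theorem abs_negOddRoot_eq_one (p : ℕ) {t : ℝ} (ht : |t| = 1) : |negOddRoot p t| = 1 := by
  obtain rfl | rfl := eq_or_eq_neg_of_abs_eq ht <;> simp [negOddRoot, Real.sign_neg]

/-- The matrix `M` is within `δ` of some `k ∈ SO(n)`, entry by entry. -/
def IsNearSO {n : ℕ} (δ : ℝ) (M : Matrix (Fin n) (Fin n) ℝ) : Prop :=
  ∃ k : Matrix (Fin n) (Fin n) ℝ, IsSO k ∧ ∀ i j, |(M - k) i j| < δ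

theorem IsNearSO.abs_apply_le {n : ℕ} {δ : ℝ} {M : Matrix (Fin n) (Fin n) ℝ}
    (hM : IsNearSO δ M) (i j : Fin n) : |M i j| ≤ 1 + δ := by
  obtain ⟨k, hk, hMk⟩ := hM
  calc |M i j| = |k i j + (M - k) i j| := by simp
    _ ≤ |k i j| + |(M - k) i j| := abs_add_le _ _
    _ ≤ 1 + δ := add_le_add (hk.abs_apply_le_one i j) (hMk i j).le

theorem IsNearSO.norm_le_of_aeval_charpoly_eq_zero {n : ℕ} {δ c : ℝ} (hc : |c| = 1)
    {z : GeneralLinearGroup (Fin n) ℝ} {M : Matrix (Fin n) (Fin n) ℝ}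
    (hM : IsNearSO δ (c •
      ((↑z⁻¹ : Matrix (Fin n) (Fin n) ℝ) * M * (↑z : Matrix (Fin n) (Fin n) ℝ))))
    {μ : ℂ} (hμ : Polynomial.aeval μ M.charpoly = 0) : ‖μ‖ ≤ n * (1 + δ) := by
  rw [← Matrix.charpoly_units_conj' z M] at hμ
  simpa using _root_.norm_le_of_aeval_charpoly_eq_zero (fun i j => by
    simpa [abs_mul, hc] using hM.abs_apply_le i j) hμ

end NearSO

section UnitsNearSO

universe u

theorem IsOrder.exists_unit_coe_eq {A F : Type*} [Ring A] [Nontrivial A] [Algebra ℚ A]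
    {O : Subring A} (hO : IsOrder A O) [Field F] [Algebra ℚ F] (j : F →ₐ[ℚ] A) {x : F}
    (hx : j x ∈ O) {v : A} (hv : v ∈ O) (hxv : j x * v = 1) : ∃ u : (𝓞 F)ˣ, (u : F) = x := by
  have h_integral {y : F} (hy : j y ∈ O) : IsIntegral ℤ y :=
    (isIntegral_algHom_iff (j.restrictScalars ℤ) j.toRingHom.injective).1 (hO.isIntegral hy)
  have hx₀ : x ≠ 0 := by
    rintro rfl
    simp at hxv
  have h_inv : v = j x⁻¹ := by
    rw [← one_mul v, ← map_one j, ← inv_mul_cancel₀ hx₀, map_mul, mul_assoc, hxv, mul_one]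
  exact ⟨⟨⟨x, h_integral hx⟩, ⟨x⁻¹, h_integral (h_inv ▸ hv)⟩,
    RingOfIntegers.ext (mul_inv_cancel₀ hx₀), RingOfIntegers.ext (inv_mul_cancel₀ hx₀)⟩, rfl⟩

theorem exists_numberField_range_eq {A : Type u} [DivisionRing A] [CharZero A]
    (E : Subalgebra ℚ A) [FiniteDimensional ℚ E] (hE : ∀ x ∈ E, ∀ y ∈ E, x * y = y * x) :
    ∃ (F : Type u) (_ : Field F) (_ : NumberField F) (j : F →ₐ[ℚ] A),
      finrank ℚ F = finrank ℚ E ∧ Set.range j = E := by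
  let _ : CommRing E := { (inferInstance : Ring E) with
    mul_comm := fun x y => Subtype.ext (hE x x.2 y y.2) }
  have : IsDomain E := Function.Injective.isDomain E.val.toRingHom Subtype.val_injective
  let _ : Field E := fieldOfFiniteDimensional ℚ E
  have : CharZero E := algebraRat.charZero E
  have h_algebra : E.algebra = DivisionRing.toRatAlgebra := Subsingleton.elim _ _
  have h_finite : @FiniteDimensional ℚ E _ _ DivisionRing.toRatAlgebra.toModule :=
    h_algebra ▸ inferInstance
  refine ⟨E, inferInstance, @NumberField.mk E _ inferInstance h_finite,
    (SubringClass.subtype E).toRatAlgHom, ?_, Subtype.range_coe⟩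
  rw [← h_algebra]

variable {n : ℕ} {A : Type*} [DivisionRing A] [Algebra ℚ A]

theorem IsOrder.abs_det_eq_one [NeZero n] [Algebra.IsCentral ℚ A] {O : Subring A}
    (hO : IsOrder A O) (hA : finrank ℚ A = n ^ 2) (ι : A →ₐ[ℚ] Matrix (Fin n) (Fin n) ℝ) {x y : A}
    (hx : x ∈ O) (hy : y ∈ O) (hxy : x * y = 1) : |(ι x).det| = 1 := by
  have h_norm := algebraMap_norm_eq_det_pow ι (by simpa using hA) x
  rw [Fintype.card_fin] at h_norm
  have h_pow : |(ι x).det| ^ n = 1 := by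
    rw [← abs_pow, ← h_norm, eq_ratCast]
    exact_mod_cast hO.abs_norm_eq_one hx hy hxy
  exact (pow_eq_one_iff_of_nonneg (abs_nonneg _) (NeZero.ne n)).1 h_pow

/-- The units `ξ ∈ 𝒪ˣ ∩ E` for which `nr(ξ)^(-1/n) · z⁻¹ (ι ξ) z` is within `δ` of `SO(n)`. -/
def unitsNearSO (ι : A →ₐ[ℚ] Matrix (Fin n) (Fin n) ℝ) (O : Subring A) (E : Set A)
    (z : GeneralLinearGroup (Fin n) ℝ) (δ : ℝ) : Set A :=
  {ξ | ξ ∈ O ∧ (∃ v ∈ O, ξ * v = 1 ∧ v * ξ = 1) ∧ ξ ∈ E ∧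
    IsNearSO δ (negOddRoot n (ι ξ).det •
      ((↑z⁻¹ : Matrix (Fin n) (Fin n) ℝ) * ι ξ * (↑z : Matrix (Fin n) (Fin n) ℝ)))}

theorem unitsNearSO_range_subset_image_boundedUnits [NeZero n] [Algebra.IsCentral ℚ A]
    (hA : finrank ℚ A = n ^ 2) (ι : A →ₐ[ℚ] Matrix (Fin n) (Fin n) ℝ) {O : Subring A}
    (hO : IsOrder A O) {F : Type*} [Field F] [Algebra ℚ F] (j : F →ₐ[ℚ] A)
    (z : GeneralLinearGroup (Fin n) ℝ) (δ : ℝ) :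
    unitsNearSO ι O (Set.range j) z δ ⊆
      (fun u : (𝓞 F)ˣ => j (u : F)) '' boundedUnits F (n * (1 + δ)) := by
  rintro _ ⟨hx, ⟨v, hv, hxv, -⟩, ⟨x, rfl⟩, h_near⟩
  obtain ⟨u, rfl⟩ := hO.exists_unit_coe_eq j hx hv hxv
  refine ⟨u, fun φ => ?_, rfl⟩
  have h_scalar := abs_negOddRoot_eq_one n (hO.abs_det_eq_one hA ι hx hv hxv)
  have h_inj : Function.Injective (extendScalars ℝ (ι.comp j)) :=
    extendScalars_comp_injective (extendScalars_injective ι) j.toRingHom.injective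
  have h_root := aeval_charpoly_map_eq_zero h_inj φ.toRatAlgHom (u : F)
  exact h_near.norm_le_of_aeval_charpoly_eq_zero h_scalar h_root

end UnitsNearSO

-- For even `n` the scalar `negOddRoot n t` still means `sign t · |t| ^ (-1/n)`.
theorem stmt10_general.{u} (n : ℕ) :
    ∃ C : ℝ, 0 < C ∧
      ∀ (A : Type u) [DivisionRing A] [CharZero A] (ι : A →ₐ[ℚ] Matrix (Fin n) (Fin n) ℝ),
        Function.Injective ι →
        Subalgebra.center ℚ A = ⊥ →
        finrank ℚ A = n ^ 2 →
        ∀ O : Subring A, IsOrder A O →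
        ∀ E : Subalgebra ℚ A, (∀ x ∈ E, ∀ y ∈ E, x * y = y * x) →
          finrank ℚ E = n →
        ∀ z : GeneralLinearGroup (Fin n) ℝ,
        ∀ δ : ℝ, 0 < δ →
        (unitsNearSO ι O E z δ).Finite ∧
          ((unitsNearSO ι O E z δ).ncard : ℝ) ≤ C * (1 + δ) ^ (n - 1) := by
  obtain ⟨C, hC, h_count⟩ := exists_ncard_boundedUnits_le_mul_pow.{u} n
  refine ⟨C * n ^ (n - 1), by cases n <;> positivity, ?_⟩
  intro A _ _ ι hι hA_center hA O hO E hE hEn z δ hδ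
  have : NeZero n := ⟨by rintro rfl; exact zero_ne_one (hι (Subsingleton.elim (ι 0) (ι 1)))⟩
  have : Algebra.IsCentral ℚ A := ⟨hA_center.le⟩
  have : FiniteDimensional ℚ E := Module.finite_of_finrank_pos (hEn ▸ NeZero.pos n)
  obtain ⟨F, _, _, j, hF, h_range⟩ := exists_numberField_range_eq E hE
  have h_subset := unitsNearSO_range_subset_image_boundedUnits hA ι hO j z δ
  rw [h_range] at h_subset
  have h_finite := boundedUnits_finite F (n * (1 + δ))
  refine ⟨(h_finite.image _).subset h_subset, ?_⟩
  have h_one_le : 1 ≤ n * (1 + δ) := by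
    have : (1 : ℝ) ≤ n := by exact_mod_cast NeZero.one_le
    nlinarith
  calc ((unitsNearSO ι O E z δ).ncard : ℝ) ≤ (boundedUnits F (n * (1 + δ))).ncard := by
        exact_mod_cast (Set.ncard_le_ncard h_subset (h_finite.image _)).trans
          (Set.ncard_image_le h_finite)
    _ ≤ C * (n * (1 + δ)) ^ (n - 1) := h_count F (hF.trans hEn) _ h_one_le
    _ = C * n ^ (n - 1) * (1 + δ) ^ (n - 1) := by rw [mul_pow, mul_assoc]

/-- For a prime `p ≥ 3` there is `C > 0` depending only on `p` such that:
for every degree-`p` commutative subalgebra (subfield) `E ⊆ A`, the number of units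
`ξ ∈ 𝒪ˣ ∩ E` with `nr(ξ)^(-1/p) · z⁻¹ (ι ξ) z` within `δ` (entrywise) of some `k ∈ SO(p)`
is at most `C·(1+δ)^(p-1)`. -/
theorem stmt10 (p : ℕ) (hp : p.Prime) (hp3 : 3 ≤ p) :
    ∃ C : ℝ, 0 < C ∧
      ∀ (A : Type) [DivisionRing A] [CharZero A]
        (ι : A →ₐ[ℚ] Matrix (Fin p) (Fin p) ℝ),
        Function.Injective ι →
        Subalgebra.center ℚ A = ⊥ →
        Module.finrank ℚ A = p ^ 2 →
        ∀ O : Subring A, IsOrder A O →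
        ∀ E : Subalgebra ℚ A, (∀ x ∈ E, ∀ y ∈ E, x * y = y * x) →
          Module.finrank ℚ E = p →
        ∀ z : Matrix.GeneralLinearGroup (Fin p) ℝ,
        ∀ δ : ℝ, 0 < δ →
        {ξ : A | ξ ∈ O ∧ (∃ v ∈ O, ξ * v = 1 ∧ v * ξ = 1) ∧ ξ ∈ E ∧
            ∃ k : Matrix (Fin p) (Fin p) ℝ, IsSO k ∧
              ∀ i j, |((negOddRoot p ((ι ξ).det)) •
                ((↑z⁻¹ : Matrix (Fin p) (Fin p) ℝ) * ι ξ *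
                  (↑z : Matrix (Fin p) (Fin p) ℝ)) - k) i j| < δ}.Finite ∧
        ({ξ : A | ξ ∈ O ∧ (∃ v ∈ O, ξ * v = 1 ∧ v * ξ = 1) ∧ ξ ∈ E ∧
            ∃ k : Matrix (Fin p) (Fin p) ℝ, IsSO k ∧
              ∀ i j, |((negOddRoot p ((ι ξ).det)) •
                ((↑z⁻¹ : Matrix (Fin p) (Fin p) ℝ) * ι ξ *
                  (↑z : Matrix (Fin p) (Fin p) ℝ)) - k) i j| < δ}.ncard : ℝ) ≤
          C * (1 + δ) ^ (p - 1) :=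
  stmt10_general p
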